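/- Let a, b, c be pairwise distinct elements of ℂ ∖ {0,1}. Let A = ℂ[x,y,z₁,z₂]/(y³ − x(x−1)(x−a)(x−b)(x−c), 1 + z₁³ + z₂³) be the coordinate ring of the product C × F₀ of the affine curve C: y³ = x(x−1)(x−a)(x−b)(x−c) (an affine model of the cyclic triple cover of ℙ¹ branched along {0,1,∞,a,b,c}) and the affine Fermat cubic F₀: 1 + z₁³ + z₂³ = 0, let K = Frac(A), and let σ be the order-3 ℂ-algebra automorphism of K with σ(y) = ω·y, σ(z₁) = ω²·z₁, σ(z₂) = ω²·z₂ (fixing x) — the diagonal G = ℤ/3ℤ action. Further let ρ be the order-3 automorphism of K with ρ(y) = ω·y (fixing x, z₁, z₂), which preserves the fixed field L = K^σ. Then there is a ℂ-algebra isomorphism φ from the function field of the affine surface W₀: y₁³ + y₂³ + x(x−1)(x−a)(x−b)(x−c) = 0 (an affine model of Rohde's surface W in ℙ(2,2,1,1)) onto L such that φ intertwines the order-3 automorphism (y₁,y₂) ↦ (ω·y₁, ω·y₂) of Frac(W₀) with the restriction of ρ to L; an isomorphism is induced by y₁ ↦ z₁·y, y₂ ↦ z₂·y (with x unchanged). In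 other words, W is G-birationally equivalent to the quotient (C × F)/G. -/

import Mathlib

/-!
Formalization conventions.

* The function field of an affine variety whose coordinate ring `ℂ[x₁,…,xₙ]/I` is an
  integral domain is formalized as `FractionRing` of that coordinate ring (for the total
  rings of fractions of the rings appearing here this is the function field).
* Two such varieties are birationally equivalent iff their function fields are
  isomorphic as `ℂ`-algebras.
-/

noncomputable section
open MvPolynomial

/-- `ω = exp(2πi/3) ∈ ℂ`, a fixed primitive cube root of unity. -/
def ω : ℂ := Complex.exp (2 * Real.pi * Complex.I / 3)

/-- Coordinate ring of the affine hypersurface `f = 0` in `ℂⁿ`. -/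
abbrev HSurf {n : ℕ} (f : MvPolynomial (Fin n) ℂ) : Type :=
  MvPolynomial (Fin n) ℂ ⧸ Ideal.span {f}

/-- Coordinate ring of the affine variety `f = g = 0` in `ℂⁿ`. -/
abbrev HSurf2 {n : ℕ} (f g : MvPolynomial (Fin n) ℂ) : Type :=
  MvPolynomial (Fin n) ℂ ⧸ Ideal.span {f, g}

/-- The image of a polynomial `p` in the function field of the hypersurface `f = 0`. -/
def cls {n : ℕ} (f : MvPolynomial (Fin n) ℂ) (p : MvPolynomial (Fin n) ℂ) :
    FractionRing (HSurf f) :=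
  algebraMap (HSurf f) (FractionRing (HSurf f)) (Ideal.Quotient.mk _ p)

/-- The image of a polynomial `p` in the function field of the variety `f = g = 0`. -/
def cls2 {n : ℕ} (f g : MvPolynomial (Fin n) ℂ) (p : MvPolynomial (Fin n) ℂ) :
    FractionRing (HSurf2 f g) :=
  algebraMap (HSurf2 f g) (FractionRing (HSurf2 f g)) (Ideal.Quotient.mk _ p)

/-- `x(x−1)(x−a)(x−b)(x−c)` in the coordinates of `C × F₀`
(`x = X 0`, `y = X 1`, `z₁ = X 2`, `z₂ = X 3`). -/
def q4 (a b c : ℂ) : MvPolynomial (Fin 4) ℂ :=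
  X 0 * (X 0 - 1) * (X 0 - C a) * (X 0 - C b) * (X 0 - C c)

/-- Defining polynomial of the curve `C : y³ = x(x−1)(x−a)(x−b)(x−c)`, as an equation
in `ℂ⁴` (an affine model of the cyclic triple cover of `ℙ¹` branched along
`{0, 1, ∞, a, b, c}`). -/
def pC (a b c : ℂ) : MvPolynomial (Fin 4) ℂ := X 1 ^ 3 - q4 a b c

/-- Defining polynomial of the affine Fermat cubic `F₀ : 1 + z₁³ + z₂³ = 0`, as an
equation in `ℂ⁴`. -/
def pF₀4 : MvPolynomial (Fin 4) ℂ := 1 + X 2 ^ 3 + X 3 ^ 3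

/-- `x(x−1)(x−a)(x−b)(x−c)` in the coordinates of `W₀` (`x = X 0`, `y₁ = X 1`, `y₂ = X 2`). -/
def q3 (a b c : ℂ) : MvPolynomial (Fin 3) ℂ :=
  X 0 * (X 0 - 1) * (X 0 - C a) * (X 0 - C b) * (X 0 - C c)

/-- Defining polynomial of the affine surface `W₀ : y₁³ + y₂³ + x(x−1)(x−a)(x−b)(x−c) = 0`
(an affine model of Rohde's surface `W ⊂ ℙ(2,2,1,1)`). -/
def pW₀ (a b c : ℂ) : MvPolynomial (Fin 3) ℂ := X 1 ^ 3 + X 2 ^ 3 + q3 a b c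

theorem omega_cube : ω ^ 3 = 1 := by
  unfold ω
  rw [← Complex.exp_nat_mul]
  rw [Complex.exp_eq_one_iff]
  exact ⟨1, by push_cast; ring⟩

theorem omega_prim : IsPrimitiveRoot ω 3 := by
  have := Complex.isPrimitiveRoot_exp 3 (by norm_num)
  unfold ω
  simpa using this

theorem omega_ne_one : ω ≠ 1 := omega_prim.ne_one (by norm_num)

theorem omega_sum : 1 + ω + ω ^ 2 = 0 := by
  have h := omega_cube
  have h1 : (ω - 1) * (1 + ω + ω ^ 2) = 0 := by linear_combination h
  rcases mul_eq_zero.mp h1 with h2 | h2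
  · exact absurd (sub_eq_zero.mp h2) omega_ne_one
  · exact h2

/-- If `r` is not a cube in an overfield then `X³ - r` is prime. -/
theorem prime_cubic {R K : Type} [CommRing R] [IsDomain R] [Field K] (f : R →+* K)
    (hf : Function.Injective f) (r : R) (h : ∀ s : K, s ^ 3 ≠ f r) :
    Prime (Polynomial.X ^ 3 - Polynomial.C r : Polynomial R) := by
  have hm : (Polynomial.X ^ 3 - Polynomial.C r : Polynomial R).Monic :=
    Polynomial.monic_X_pow_sub_C r (by norm_num)
  have hirr : Irreducible (Polynomial.X ^ 3 - Polynomial.C (f r) : Polynomial K) :=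
    X_pow_sub_C_irreducible_of_prime (by norm_num) h
  have hp := hirr.prime
  have hmap : (Polynomial.X ^ 3 - Polynomial.C r : Polynomial R).map f =
      (Polynomial.X ^ 3 - Polynomial.C (f r) : Polynomial K) := by simp
  rw [← hmap] at hp
  refine ⟨hm.ne_zero, ?_, ?_⟩
  · intro hu
    exact hp.not_isUnit (hu.map (Polynomial.mapRingHom f))
  · intro p q hpq
    have := (Polynomial.mapRingHom f).map_dvd hpq
    rw [map_mul] at this
    rcases hp.dvd_or_dvd this with h1 | h1
    · exact Or.inl ((Polynomial.map_dvd_map f hf hm).mp h1)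
    · exact Or.inr ((Polynomial.map_dvd_map f hf hm).mp h1)

theorem adjoinRoot_domain {R K : Type} [CommRing R] [IsDomain R] [Field K] (f : R →+* K)
    (hf : Function.Injective f) (r : R) (h : ∀ s : K, s ^ 3 ≠ f r) :
    IsDomain (AdjoinRoot (Polynomial.X ^ 3 - Polynomial.C r : Polynomial R)) :=
  AdjoinRoot.isDomain_of_prime (prime_cubic f hf r h)

/-- In an integrally closed domain, being a cube in the fraction field means being a cube. -/
theorem not_cube_frac {R : Type} [CommRing R] [IsDomain R] [IsIntegrallyClosed R] (r : R)
    (h : ∀ s : R, s ^ 3 ≠ r) (s : FractionRing R) :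
    s ^ 3 ≠ algebraMap R (FractionRing R) r := by
  intro hs
  have hint : IsIntegral R (s ^ 3) := by rw [hs]; exact isIntegral_algebraMap
  obtain ⟨t, ht⟩ := IsIntegrallyClosed.exists_algebraMap_eq_of_isIntegral_pow
    (K := FractionRing R) (by norm_num : 0 < 3) hint
  apply h t
  apply IsFractionRing.injective R (FractionRing R)
  rw [map_pow, ht, hs]

/-- A polynomial with a simple root is not a cube. -/
theorem not_cube_poly {k : Type} [Field k] (α : k) (g : Polynomial k) (hg : g.eval α ≠ 0)
    (s : Polynomial k) : s ^ 3 ≠ (Polynomial.X - Polynomial.C α) * g := by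
  intro h
  have h0 : s.eval α = 0 := by
    have := congrArg (Polynomial.eval α) h
    simpa using this
  obtain ⟨t, rfl⟩ := Polynomial.dvd_iff_isRoot.mpr h0
  have h2 : (Polynomial.X - Polynomial.C α) ^ 2 * t ^ 3 = g := by
    apply mul_left_cancel₀ (Polynomial.X_sub_C_ne_zero α)
    rw [← h]; ring
  apply hg
  rw [← h2]; simp

/-- `x(x−1)(x−a)(x−b)(x−c)` as a univariate polynomial. -/
def qU {R : Type} [CommRing R] (a b c : R) : Polynomial R :=
  Polynomial.X * (Polynomial.X - 1) * (Polynomial.X - Polynomial.C a)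
    * (Polynomial.X - Polynomial.C b) * (Polynomial.X - Polynomial.C c)

theorem qU_not_cube {k : Type} [Field k] (a b c : k) (ha0 : a ≠ 0) (hb0 : b ≠ 0) (hc0 : c ≠ 0)
    (s : Polynomial k) : s ^ 3 ≠ qU a b c := by
  have := not_cube_poly 0 ((Polynomial.X - 1) * (Polynomial.X - Polynomial.C a)
    * (Polynomial.X - Polynomial.C b) * (Polynomial.X - Polynomial.C c)) (by simp [*]) s
  intro h
  apply this
  rw [h, qU]; simp; ring

/-- Function ring of the Fermat cubic, as an iterated extension. -/
abbrev DF : Type :=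
  AdjoinRoot (Polynomial.X ^ 3 - Polynomial.C (-(1 + Polynomial.X ^ 3)) :
    Polynomial (Polynomial ℂ))

instance DF_domain : IsDomain DF := by
  apply adjoinRoot_domain (algebraMap (Polynomial ℂ) (FractionRing (Polynomial ℂ)))
    (IsFractionRing.injective _ _)
  apply not_cube_frac
  intro s hs
  apply not_cube_poly (-1) (-(Polynomial.X ^ 2 - Polynomial.X + 1)) (by norm_num) s
  rw [hs]; simp; ring

abbrev TA (a b c : ℂ) : Type :=
  AdjoinRoot (Polynomial.X ^ 3 - Polynomial.C
    (qU (algebraMap ℂ DF a) (algebraMap ℂ DF b) (algebraMap ℂ DF c)) :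
    Polynomial (Polynomial DF))

theorem TA_domain (a b c : ℂ) (ha0 : a ≠ 0) (hb0 : b ≠ 0) (hc0 : c ≠ 0) :
    IsDomain (TA a b c) := by
  have hinj : Function.Injective (algebraMap DF (FractionRing DF)) :=
    IsFractionRing.injective _ _
  have hC : Function.Injective (algebraMap ℂ DF) := (algebraMap ℂ DF).injective
  apply adjoinRoot_domain ((algebraMap (Polynomial (FractionRing DF))
    (FractionRing (Polynomial (FractionRing DF)))).comp
      (Polynomial.mapRingHom (algebraMap DF (FractionRing DF))))
  · exact (IsFractionRing.injective (Polynomial (FractionRing DF))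
      (FractionRing (Polynomial (FractionRing DF)))).comp (Polynomial.map_injective _ hinj)
  · intro s
    rw [RingHom.comp_apply]
    apply not_cube_frac
    intro s
    have h := qU_not_cube (algebraMap DF (FractionRing DF) (algebraMap ℂ DF a))
      (algebraMap DF (FractionRing DF) (algebraMap ℂ DF b))
      (algebraMap DF (FractionRing DF) (algebraMap ℂ DF c))
      (by simpa using ha0)
      (by simpa using hb0)
      (by simpa using hc0) s
    intro hs
    apply h
    rw [hs]
    simp [qU]

abbrev TW (a b c : ℂ) : Type :=
  AdjoinRoot (Polynomial.X ^ 3 - Polynomial.C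
    (-(Polynomial.X ^ 3 + Polynomial.C (qU a b c))) : Polynomial (Polynomial (Polynomial ℂ)))

theorem TW_domain (a b c : ℂ) (ha0 : a ≠ 0) (hb0 : b ≠ 0) (hc0 : c ≠ 0) :
    IsDomain (TW a b c) := by
  apply adjoinRoot_domain (algebraMap (Polynomial (Polynomial ℂ))
    (FractionRing (Polynomial (Polynomial ℂ)))) (IsFractionRing.injective _ _)
  apply not_cube_frac
  intro s hs
  apply qU_not_cube a b c ha0 hb0 hc0 (-(s.eval 0))
  have := congrArg (Polynomial.eval 0) hs
  simp at this
  linear_combination -this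

/-! ### Maps out of the coordinate rings -/

/-- Universal property of the coordinate ring of `W₀`. -/
def liftB (a b c : ℂ) {S : Type} [CommRing S] [Algebra ℂ S] (x y₁ y₂ : S)
    (h : y₁ ^ 3 + y₂ ^ 3 + x * (x - 1) * (x - algebraMap ℂ S a) * (x - algebraMap ℂ S b)
      * (x - algebraMap ℂ S c) = 0) : HSurf (pW₀ a b c) →ₐ[ℂ] S :=
  Ideal.Quotient.liftₐ _ (aeval ![x, y₁, y₂]) (by
    intro p hp
    obtain ⟨r, rfl⟩ := Ideal.mem_span_singleton.mp hp
    rw [map_mul]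
    have : aeval ![x, y₁, y₂] (pW₀ a b c) = 0 := by
      simpa [pW₀, q3] using h
    rw [this, zero_mul])

/-- Universal property of the coordinate ring of `C × F₀`. -/
def liftA (a b c : ℂ) {S : Type} [CommRing S] [Algebra ℂ S] (x y z₁ z₂ : S)
    (h : y ^ 3 = x * (x - 1) * (x - algebraMap ℂ S a) * (x - algebraMap ℂ S b)
      * (x - algebraMap ℂ S c)) (h' : 1 + z₁ ^ 3 + z₂ ^ 3 = 0) :
    HSurf2 (pC a b c) pF₀4 →ₐ[ℂ] S :=
  Ideal.Quotient.liftₐ _ (aeval ![x, y, z₁, z₂]) (by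
    intro p hp
    obtain ⟨r, s, rfl⟩ := Ideal.mem_span_pair.mp hp
    have h1 : aeval ![x, y, z₁, z₂] (pC a b c) = 0 := by
      simpa [pC, q4, sub_eq_zero] using h
    have h2 : aeval ![x, y, z₁, z₂] pF₀4 = 0 := by
      simpa [pF₀4] using h'
    rw [map_add, map_mul, map_mul, h1, h2, mul_zero, mul_zero, add_zero])

theorem liftB_mk (a b c : ℂ) {S : Type} [CommRing S] [Algebra ℂ S] (x y₁ y₂ : S) (h)
    (p : MvPolynomial (Fin 3) ℂ) :
    liftB a b c x y₁ y₂ h (Ideal.Quotient.mk _ p) = aeval ![x, y₁, y₂] p := rfl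

theorem liftA_mk (a b c : ℂ) {S : Type} [CommRing S] [Algebra ℂ S] (x y z₁ z₂ : S) (h h')
    (p : MvPolynomial (Fin 4) ℂ) :
    liftA a b c x y z₁ z₂ h h' (Ideal.Quotient.mk _ p) = aeval ![x, y, z₁, z₂] p := rfl

theorem pW_map (a b c : ℂ) {S : Type} [CommRing S] (f : MvPolynomial (Fin 3) ℂ →+* S) :
    f (pW₀ a b c) = f (X 1) ^ 3 + f (X 2) ^ 3 + f (X 0) * (f (X 0) - 1) * (f (X 0) - f (C a))
      * (f (X 0) - f (C b)) * (f (X 0) - f (C c)) := by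
  simp [pW₀, q3]

theorem pC_map (a b c : ℂ) {S : Type} [CommRing S] (f : MvPolynomial (Fin 4) ℂ →+* S) :
    f (pC a b c) = f (X 1) ^ 3 - f (X 0) * (f (X 0) - 1) * (f (X 0) - f (C a))
      * (f (X 0) - f (C b)) * (f (X 0) - f (C c)) := by
  simp [pC, q4]

theorem pF_map {S : Type} [CommRing S] (f : MvPolynomial (Fin 4) ℂ →+* S) :
    f pF₀4 = 1 + f (X 2) ^ 3 + f (X 3) ^ 3 := by
  simp [pF₀4]

theorem relB (a b c : ℂ) : (Ideal.Quotient.mk (Ideal.span {pW₀ a b c}) (pW₀ a b c)) = 0 :=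
  Ideal.Quotient.eq_zero_iff_mem.mpr (Ideal.subset_span rfl)

theorem relA1 (a b c : ℂ) :
    (Ideal.Quotient.mk (Ideal.span {pC a b c, pF₀4}) (pC a b c)) = 0 :=
  Ideal.Quotient.eq_zero_iff_mem.mpr (Ideal.subset_span (by simp))

theorem relA2 (a b c : ℂ) :
    (Ideal.Quotient.mk (Ideal.span {pC a b c, pF₀4}) pF₀4) = 0 :=
  Ideal.Quotient.eq_zero_iff_mem.mpr (Ideal.subset_span (by simp))

theorem adj_root {R : Type} [CommRing R] (r : R) :
    (AdjoinRoot.root (Polynomial.X ^ 3 - Polynomial.C r : Polynomial R)) ^ 3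
      = AdjoinRoot.of _ r := by
  have h := AdjoinRoot.eval₂_root (Polynomial.X ^ 3 - Polynomial.C r : Polynomial R)
  rw [Polynomial.eval₂_sub, Polynomial.eval₂_X_pow, Polynomial.eval₂_C] at h
  exact sub_eq_zero.mp h

/-- Universal property of adjoining a cube root. -/
def adjLift {R S : Type} [CommRing R] [CommRing S] (r : R) (f : R →+* S) (y : S)
    (h : y ^ 3 = f r) :
    AdjoinRoot (Polynomial.X ^ 3 - Polynomial.C r : Polynomial R) →+* S :=
  AdjoinRoot.lift f y (by
    rw [Polynomial.eval₂_sub, Polynomial.eval₂_X_pow, Polynomial.eval₂_C, h, sub_self])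

theorem adjLift_of {R S : Type} [CommRing R] [CommRing S] (r : R) (f : R →+* S) (y : S)
    (h : y ^ 3 = f r) (t : R) : adjLift r f y h (AdjoinRoot.of _ t) = f t := by
  simp [adjLift]

theorem adjLift_root {R S : Type} [CommRing R] [CommRing S] (r : R) (f : R →+* S) (y : S)
    (h : y ^ 3 = f r) : adjLift r f y h (AdjoinRoot.root _) = y := by
  simp [adjLift]

theorem qU_map {R S : Type} [CommRing R] [CommRing S] (a b c : R) (f : Polynomial R →+* S) :
    f (qU a b c) = f Polynomial.X * (f Polynomial.X - 1) * (f Polynomial.X - f (Polynomial.C a))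
      * (f Polynomial.X - f (Polynomial.C b)) * (f Polynomial.X - f (Polynomial.C c)) := by
  simp [qU]

theorem neg_cube_add_map {R S : Type} [CommRing R] [CommRing S] (u v : R) (f : R →+* S) :
    f (-(u ^ 3 + v)) = -(f u ^ 3 + f v) := by
  simp

theorem neg_one_add_cube_map {R S : Type} [CommRing R] [CommRing S] (u : R) (f : R →+* S) :
    f (-(1 + u ^ 3)) = -(1 + f u ^ 3) := by
  simp

theorem B_domain (a b c : ℂ) (ha0 : a ≠ 0) (hb0 : b ≠ 0) (hc0 : c ≠ 0) :
    IsDomain (HSurf (pW₀ a b c)) := by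
  have := TW_domain a b c ha0 hb0 hc0
  let i1 : Polynomial (Polynomial ℂ) →+* TW a b c := AdjoinRoot.of _
  let j : Polynomial ℂ →+* TW a b c := i1.comp Polynomial.C
  have hroot : (AdjoinRoot.root _ : TW a b c) ^ 3 =
      -((i1 Polynomial.X) ^ 3 + j (qU a b c)) :=
    (adj_root _).trans (neg_cube_add_map _ _ i1)
  have hq := qU_map a b c j
  let f : HSurf (pW₀ a b c) →ₐ[ℂ] TW a b c := liftB a b c
    (j Polynomial.X) (AdjoinRoot.root _)
    (i1 Polynomial.X) (by
      have e : ∀ t : ℂ, algebraMap ℂ (TW a b c) t = j (Polynomial.C t) := fun t => rfl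
      simp only [e]
      linear_combination hroot - hq)
  have relr := relB a b c
  rw [pW_map] at relr
  let g0 : Polynomial ℂ →+* HSurf (pW₀ a b c) :=
    Polynomial.eval₂RingHom (algebraMap ℂ (HSurf (pW₀ a b c))) (Ideal.Quotient.mk _ (X 0))
  have g0X : g0 Polynomial.X = Ideal.Quotient.mk _ (X 0) := by simp [g0]
  have g0C : ∀ t, g0 (Polynomial.C t) = Ideal.Quotient.mk _ (C t) := by
    intro t; simp [g0]; rfl
  let g1 : Polynomial (Polynomial ℂ) →+* HSurf (pW₀ a b c) :=
    Polynomial.eval₂RingHom g0 (Ideal.Quotient.mk _ (X 2))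
  have g1X : g1 Polynomial.X = Ideal.Quotient.mk _ (X 2) := by simp [g1]
  have g1C : ∀ t, g1 (Polynomial.C t) = g0 t := by intro t; simp [g1]
  let g : TW a b c →+* HSurf (pW₀ a b c) := adjLift _ g1 (Ideal.Quotient.mk _ (X 1)) (by
      rw [map_neg, map_add, map_pow, g1X, g1C, qU_map, g0X, g0C, g0C, g0C]
      linear_combination relr)
  have gj : ∀ t, g (j t) = g0 t := by
    intro t
    exact (adjLift_of _ _ _ _ _).trans (g1C t)
  have hgf : g.comp f.toRingHom = RingHom.id _ := by
    apply Ideal.Quotient.ringHom_ext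
    apply MvPolynomial.ringHom_ext
    · intro t
      have h : f (Ideal.Quotient.mk _ (C t)) = j (Polynomial.C t) := f.commutes t
      simp only [RingHom.comp_apply, AlgHom.toRingHom_eq_coe, RingHom.coe_coe, h, gj, g0C]
      rfl
    · intro i
      simp only [RingHom.comp_apply, AlgHom.toRingHom_eq_coe, RingHom.coe_coe, f, liftB_mk, aeval_X]
      fin_cases i
      · exact (gj _).trans g0X
      · exact adjLift_root _ _ _ _
      · exact (adjLift_of _ _ _ _ _).trans g1X
  exact Function.Injective.isDomain f.toRingHom
    (Function.LeftInverse.injective (g := g) (fun x => congrArg (fun h => h x) hgf))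

theorem A_domain (a b c : ℂ) (ha0 : a ≠ 0) (hb0 : b ≠ 0) (hc0 : c ≠ 0) :
    IsDomain (HSurf2 (pC a b c) pF₀4) := by
  have := TA_domain a b c ha0 hb0 hc0
  let i1 : Polynomial DF →+* TA a b c := AdjoinRoot.of _
  let j : DF →+* TA a b c := i1.comp Polynomial.C
  have hroot : (AdjoinRoot.root _ : TA a b c) ^ 3 =
      i1 (qU (algebraMap ℂ DF a) (algebraMap ℂ DF b) (algebraMap ℂ DF c)) := adj_root _
  have hq := qU_map (algebraMap ℂ DF a) (algebraMap ℂ DF b) (algebraMap ℂ DF c) i1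
  have hroot' : (AdjoinRoot.root _ : DF) ^ 3 = -(1 + (AdjoinRoot.of _ Polynomial.X) ^ 3) :=
    (adj_root _).trans (neg_one_add_cube_map _ _)
  have e : ∀ t : ℂ, algebraMap ℂ (TA a b c) t =
        i1 (Polynomial.C (algebraMap ℂ DF t)) := fun t => rfl
  let f : HSurf2 (pC a b c) pF₀4 →ₐ[ℂ] TA a b c := liftA a b c
    (i1 Polynomial.X) (AdjoinRoot.root _)
    (j (AdjoinRoot.of _ Polynomial.X)) (j (AdjoinRoot.root _)) (by
      simp only [e]
      exact hroot.trans hq) (by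
      have h := congrArg j hroot'
      have h1 := (map_pow j _ 3).symm.trans (h.trans ((map_neg j _).trans
        (congrArg Neg.neg ((map_add j _ _).trans
          (congrArg₂ (· + ·) (map_one j) (map_pow j _ 3))))))
      linear_combination h1)
  have relr1 := relA1 a b c
  have relr2 := relA2 a b c
  rw [pC_map] at relr1
  rw [pF_map] at relr2
  let g00 : Polynomial ℂ →+* HSurf2 (pC a b c) pF₀4 :=
    Polynomial.eval₂RingHom (algebraMap ℂ (HSurf2 (pC a b c) pF₀4)) (Ideal.Quotient.mk _ (X 2))
  have g00X : g00 Polynomial.X = Ideal.Quotient.mk _ (X 2) := by simp [g00]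
  have g00C : ∀ t, g00 (Polynomial.C t) = Ideal.Quotient.mk _ (C t) := by
    intro t; simp [g00]; rfl
  let g0 : DF →+* HSurf2 (pC a b c) pF₀4 := adjLift _ g00 (Ideal.Quotient.mk _ (X 3)) (by
      rw [map_neg, map_add, map_pow, map_one, g00X]
      linear_combination relr2)
  have hg0 : ∀ t : ℂ, g0 (algebraMap ℂ DF t) = Ideal.Quotient.mk _ (C t) := by
    intro t
    exact (adjLift_of _ _ _ _ _).trans (g00C t)
  let g1 : Polynomial DF →+* HSurf2 (pC a b c) pF₀4 :=
    Polynomial.eval₂RingHom g0 (Ideal.Quotient.mk _ (X 0))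
  have g1X : g1 Polynomial.X = Ideal.Quotient.mk _ (X 0) := by simp [g1]
  have g1C : ∀ t, g1 (Polynomial.C t) = g0 t := by intro t; simp [g1]
  let g : TA a b c →+* HSurf2 (pC a b c) pF₀4 := adjLift _ g1 (Ideal.Quotient.mk _ (X 1)) (by
      rw [qU_map, g1X, g1C, g1C, g1C, hg0, hg0, hg0]
      linear_combination relr1)
  have gi : ∀ t, g (i1 t) = g1 t := by
    intro t
    exact adjLift_of _ _ _ _ _
  have gj : ∀ t, g (j t) = g0 t := by
    intro t
    exact (gi _).trans (g1C t)
  have hgf : g.comp f.toRingHom = RingHom.id _ := by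
    apply Ideal.Quotient.ringHom_ext
    apply MvPolynomial.ringHom_ext
    · intro t
      have h : f (Ideal.Quotient.mk _ (C t)) = j (algebraMap ℂ DF t) := f.commutes t
      simp only [RingHom.comp_apply, AlgHom.toRingHom_eq_coe, RingHom.coe_coe, h, gj, hg0]
      rfl
    · intro i
      simp only [RingHom.comp_apply, AlgHom.toRingHom_eq_coe, RingHom.coe_coe, f, liftA_mk, aeval_X]
      fin_cases i
      · exact (gi _).trans g1X
      · exact adjLift_root _ _ _ _
      · exact (gj _).trans ((adjLift_of _ _ _ _ _).trans g00X)
      · exact (gj _).trans (adjLift_root _ _ _ _)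
  exact Function.Injective.isDomain f.toRingHom
    (Function.LeftInverse.injective (g := g) (fun x => congrArg (fun h => h x) hgf))

/-! ### Automorphisms and extension to fraction fields -/

theorem frac_hom_ext {n : ℕ} {I : Ideal (MvPolynomial (Fin n) ℂ)}
    [IsDomain (MvPolynomial (Fin n) ℂ ⧸ I)] {K : Type} [Field K] [Algebra ℂ K]
    (f g : FractionRing (MvPolynomial (Fin n) ℂ ⧸ I) →ₐ[ℂ] K)
    (h : ∀ i, f (algebraMap _ _ (Ideal.Quotient.mk I (X i)))
      = g (algebraMap _ _ (Ideal.Quotient.mk I (X i)))) : f = g := by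
  have h1 : f.comp (IsScalarTower.toAlgHom ℂ (MvPolynomial (Fin n) ℂ ⧸ I)
      (FractionRing (MvPolynomial (Fin n) ℂ ⧸ I))) = g.comp (IsScalarTower.toAlgHom ℂ
      (MvPolynomial (Fin n) ℂ ⧸ I) (FractionRing (MvPolynomial (Fin n) ℂ ⧸ I))) := by
    apply Ideal.Quotient.algHom_ext
    apply MvPolynomial.algHom_ext
    intro i
    exact h i
  have h2 : ∀ t, f (algebraMap _ _ t) = g (algebraMap _ _ t) := fun t =>
    congrArg (fun e => e t) h1
  apply AlgHom.ext
  intro k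
  obtain ⟨p, q, -, rfl⟩ := IsFractionRing.div_surjective (MvPolynomial (Fin n) ℂ ⧸ I) k
  rw [map_div₀, map_div₀, h2, h2]

/-- Diagonal scaling automorphism of the function field. -/
theorem exists_scale {n : ℕ} (I : Ideal (MvPolynomial (Fin n) ℂ))
    [IsDomain (MvPolynomial (Fin n) ℂ ⧸ I)] (u : Fin n → ℂ) (hu : ∀ i, u i ^ 3 = 1)
    (f : (MvPolynomial (Fin n) ℂ ⧸ I) →ₐ[ℂ] (MvPolynomial (Fin n) ℂ ⧸ I))
    (hf : ∀ i, f (Ideal.Quotient.mk I (X i)) = u i • Ideal.Quotient.mk I (X i)) :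
    ∃ σ : FractionRing (MvPolynomial (Fin n) ℂ ⧸ I) ≃ₐ[ℂ]
        FractionRing (MvPolynomial (Fin n) ℂ ⧸ I),
      (∀ i, σ (algebraMap _ _ (Ideal.Quotient.mk I (X i)))
        = u i • algebraMap _ _ (Ideal.Quotient.mk I (X i))) ∧ (∀ k, σ (σ (σ k)) = k) ∧
      ∀ t, σ (algebraMap _ _ t) = algebraMap _ _ (f t) := by
  have h3 : f.comp (f.comp f) = AlgHom.id ℂ _ := by
    apply Ideal.Quotient.algHom_ext
    apply MvPolynomial.algHom_ext
    intro i
    change f (f (f (Ideal.Quotient.mk I (X i)))) = Ideal.Quotient.mk I (X i)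
    rw [hf, map_smul, hf, map_smul, map_smul, hf, smul_smul, smul_smul]
    rw [show u i * u i * u i = 1 by rw [← hu i]; ring, one_smul]
  have h3' : ∀ t, f (f (f t)) = t := fun t => congrArg (fun e => e t) h3
  have hinj : Function.Injective f := fun s t h => by
    rw [← h3' s, h, h3']
  have hinj' : Function.Injective ((IsScalarTower.toAlgHom ℂ (MvPolynomial (Fin n) ℂ ⧸ I)
      (FractionRing (MvPolynomial (Fin n) ℂ ⧸ I))).comp f) :=
    (IsFractionRing.injective (MvPolynomial (Fin n) ℂ ⧸ I)
      (FractionRing (MvPolynomial (Fin n) ℂ ⧸ I))).comp hinj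
  let F : FractionRing (MvPolynomial (Fin n) ℂ ⧸ I) →ₐ[ℂ]
        FractionRing (MvPolynomial (Fin n) ℂ ⧸ I) :=
    IsFractionRing.liftAlgHom (K := FractionRing (MvPolynomial (Fin n) ℂ ⧸ I)) hinj'
  have hF : ∀ t, F (algebraMap _ _ t) = algebraMap _ _ (f t) := fun t =>
    IsFractionRing.lift_algebraMap hinj' t
  have hF3 : F.comp (F.comp F) = AlgHom.id ℂ _ := by
    apply frac_hom_ext
    intro i
    simp only [AlgHom.comp_apply, hF, h3', AlgHom.id_apply]
  have hF3' : (F.comp F).comp F = AlgHom.id ℂ _ := hF3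
  refine ⟨AlgEquiv.ofAlgHom F (F.comp F) hF3 hF3', ?_, ?_, ?_⟩
  · intro i
    change F _ = _
    rw [hF, hf]
    exact map_smul (IsScalarTower.toAlgHom ℂ (MvPolynomial (Fin n) ℂ ⧸ I)
      (FractionRing (MvPolynomial (Fin n) ℂ ⧸ I))) _ _
  · intro k
    exact congrArg (fun e => e k) hF3
  · exact hF

theorem order_three {K : Type} [Field K] [Algebra ℂ K] (σ : K ≃ₐ[ℂ] K) (k : K) (hk : k ≠ 0)
    (h : σ k = ω • k) (h3 : ∀ k, σ (σ (σ k)) = k) : orderOf σ = 3 := by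
  have : Fact (Nat.Prime 3) := ⟨by norm_num⟩
  apply orderOf_eq_prime
  · apply AlgEquiv.ext
    intro t
    exact h3 t
  · intro h1
    rw [h1] at h
    have h2 : (ω - 1) • k = 0 := by
      rw [sub_smul, ← h, one_smul]
      exact sub_self k
    rcases smul_eq_zero.mp h2 with h4 | h4
    · exact omega_ne_one (sub_eq_zero.mp h4)
    · exact hk h4

/-! ### Points -/

theorem exists_pt (a b c : ℂ) : ∃ x : ℂ, x * (x - 1) * (x - a) * (x - b) * (x - c) ≠ 0 := by
  obtain ⟨x, hx⟩ := (Set.toFinite ({0, 1, a, b, c} : Set ℂ)).exists_notMem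
  refine ⟨x, ?_⟩
  simp only [Set.mem_insert_iff, Set.mem_singleton_iff, not_or] at hx
  obtain ⟨h0, h1, h2, h3, h4⟩ := hx
  simp only [ne_eq, mul_eq_zero, sub_eq_zero, not_or]
  exact ⟨⟨⟨⟨h0, h1⟩, h2⟩, h3⟩, h4⟩

theorem y_ne_zero (a b c : ℂ) :
    (Ideal.Quotient.mk (Ideal.span {pC a b c, pF₀4}) (X 1)) ≠ 0 := by
  obtain ⟨x, hx⟩ := exists_pt a b c
  obtain ⟨y, hy⟩ := IsAlgClosed.exists_pow_nat_eq
    (x * (x - 1) * (x - a) * (x - b) * (x - c)) (by norm_num : 0 < 3)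
  intro h
  have := congrArg (liftA a b c x y (-1) 0 hy (by norm_num)) h
  rw [liftA_mk, map_zero, aeval_X] at this
  change y = 0 at this
  rw [this] at hy
  exact hx (by rw [← hy]; norm_num)

theorem q3_ne_zero (a b c : ℂ) :
    (Ideal.Quotient.mk (Ideal.span {pW₀ a b c}) (q3 a b c)) ≠ 0 := by
  obtain ⟨x, hx⟩ := exists_pt a b c
  obtain ⟨y, hy⟩ := IsAlgClosed.exists_pow_nat_eq
    (-(x * (x - 1) * (x - a) * (x - b) * (x - c))) (by norm_num : 0 < 3)
  intro h
  have := congrArg (liftB a b c x y 0 (by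
    rw [hy]
    change -(x * (x - 1) * (x - a) * (x - b) * (x - c)) + 0 ^ 3
      + (x * (x - 1) * (x - a) * (x - b) * (x - c)) = 0
    ring)) h
  rw [liftB_mk, map_zero] at this
  simp [q3] at this
  apply hx
  simp only [mul_eq_zero]
  exact this

theorem y1_ne_zero (a b c : ℂ) :
    (Ideal.Quotient.mk (Ideal.span {pW₀ a b c}) (X 1)) ≠ 0 := by
  intro h
  have := congrArg (liftB a b c (0 : ℂ) 1 (-1) (by norm_num)) h
  rw [liftB_mk, map_zero, aeval_X] at this
  exact one_ne_zero this

/-! ### The map `W₀ ← C × F₀` on coordinate rings -/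

theorem relB' (a b c : ℂ) {S : Type} [CommRing S] [Algebra ℂ S]
    (f : HSurf (pW₀ a b c) →ₐ[ℂ] S) :
    f (Ideal.Quotient.mk _ (X 1)) ^ 3 + f (Ideal.Quotient.mk _ (X 2)) ^ 3
      + f (Ideal.Quotient.mk _ (q3 a b c)) = 0 := by
  have h : f (Ideal.Quotient.mk _ (pW₀ a b c)) = 0 := by rw [relB, map_zero]
  have e : f (Ideal.Quotient.mk _ (X 1 ^ 3 + X 2 ^ 3 + q3 a b c)) = 0 := h
  simpa only [map_add, map_pow] using e

theorem relA' (a b c : ℂ) {S : Type} [CommRing S] [Algebra ℂ S]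
    (f : HSurf2 (pC a b c) pF₀4 →ₐ[ℂ] S) :
    f (Ideal.Quotient.mk _ (X 1)) ^ 3 = f (Ideal.Quotient.mk _ (q4 a b c)) ∧
    1 + f (Ideal.Quotient.mk _ (X 2)) ^ 3 + f (Ideal.Quotient.mk _ (X 3)) ^ 3 = 0 := by
  constructor
  · have h : f (Ideal.Quotient.mk _ (pC a b c)) = 0 := by rw [relA1, map_zero]
    have e : f (Ideal.Quotient.mk _ (X 1 ^ 3 - q4 a b c)) = 0 := h
    simpa only [map_sub, map_pow, sub_eq_zero] using e
  · have h : f (Ideal.Quotient.mk _ pF₀4) = 0 := by rw [relA2, map_zero]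
    have e : f (Ideal.Quotient.mk _ (1 + X 2 ^ 3 + X 3 ^ 3)) = 0 := h
    simpa only [map_add, map_pow, map_one] using e

theorem q3_map (a b c : ℂ) {S : Type} [CommRing S] [Algebra ℂ S]
    (f : HSurf (pW₀ a b c) →ₐ[ℂ] S) (x : S) (hx : f (Ideal.Quotient.mk _ (X 0)) = x) :
    f (Ideal.Quotient.mk _ (q3 a b c)) = x * (x - 1) * (x - algebraMap ℂ S a)
      * (x - algebraMap ℂ S b) * (x - algebraMap ℂ S c) := by
  have e : ∀ t, f (Ideal.Quotient.mk _ (C t)) = algebraMap ℂ S t := f.commutes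
  simp only [q3, map_mul, map_sub, map_one, hx, e]

theorem q4_map (a b c : ℂ) {S : Type} [CommRing S] [Algebra ℂ S]
    (f : HSurf2 (pC a b c) pF₀4 →ₐ[ℂ] S) (x : S) (hx : f (Ideal.Quotient.mk _ (X 0)) = x) :
    f (Ideal.Quotient.mk _ (q4 a b c)) = x * (x - 1) * (x - algebraMap ℂ S a)
      * (x - algebraMap ℂ S b) * (x - algebraMap ℂ S c) := by
  have e : ∀ t, f (Ideal.Quotient.mk _ (C t)) = algebraMap ℂ S t := f.commutes
  simp only [q4, map_mul, map_sub, map_one, hx, e]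

/-- The homomorphism of coordinate rings `y₁ ↦ z₁ y`, `y₂ ↦ z₂ y`, `x ↦ x`. -/
def psi (a b c : ℂ) : HSurf (pW₀ a b c) →ₐ[ℂ] HSurf2 (pC a b c) pF₀4 :=
  liftB a b c (Ideal.Quotient.mk _ (X 0)) (Ideal.Quotient.mk _ (X 2 * X 1))
    (Ideal.Quotient.mk _ (X 3 * X 1)) (by
      obtain ⟨h1, h2⟩ := relA' a b c (AlgHom.id ℂ _)
      rw [q4_map a b c (AlgHom.id ℂ _) _ rfl] at h1
      simp only [AlgHom.id_apply] at h1 h2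
      rw [map_mul, map_mul]
      linear_combination (Ideal.Quotient.mk (Ideal.span {pC a b c, pF₀4}) (X 1)) ^ 3 * h2 - h1)

theorem psi_injective (a b c : ℂ) [IsDomain (HSurf (pW₀ a b c))] :
    Function.Injective (psi a b c) := by
  let KB := FractionRing (HSurf (pW₀ a b c))
  let iB : HSurf (pW₀ a b c) →ₐ[ℂ] KB := IsScalarTower.toAlgHom ℂ _ _
  have hiB : Function.Injective iB := IsFractionRing.injective _ _
  obtain ⟨q, hq⟩ : ∃ q, q = iB (Ideal.Quotient.mk _ (q3 a b c)) := ⟨_, rfl⟩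
  have hq0 : q ≠ 0 := by
    rw [hq]
    exact (map_ne_zero_iff iB hiB).mpr (q3_ne_zero a b c)
  let T := AdjoinRoot (Polynomial.X ^ 3 - Polynomial.C q : Polynomial KB)
  let o : KB →ₐ[ℂ] T := IsScalarTower.toAlgHom ℂ KB T
  have ho : Function.Injective o := by
    apply AdjoinRoot.of.injective_of_degree_ne_zero
    rw [Polynomial.degree_X_pow_sub_C (by norm_num)]
    norm_num
  let y : T := AdjoinRoot.root _
  have hy : y ^ 3 = o q := adj_root q
  have hqi : o q * o q⁻¹ = 1 := by
    rw [← map_mul, mul_inv_cancel₀ hq0, map_one]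
  have hrel := relB' a b c (o.comp iB)
  have hqq : (o.comp iB) (Ideal.Quotient.mk _ (q3 a b c)) = o q := congrArg o hq.symm
  have hq' := q3_map a b c (o.comp iB) _ rfl
  rw [hqq] at hrel hq'
  let h : HSurf2 (pC a b c) pF₀4 →ₐ[ℂ] T := liftA a b c
    ((o.comp iB) (Ideal.Quotient.mk _ (X 0))) y
    ((o.comp iB) (Ideal.Quotient.mk _ (X 1)) * y ^ 2 * o q⁻¹)
    ((o.comp iB) (Ideal.Quotient.mk _ (X 2)) * y ^ 2 * o q⁻¹) (hy.trans hq') (by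
      generalize (o.comp iB) (Ideal.Quotient.mk _ (X 1)) = u at *
      generalize (o.comp iB) (Ideal.Quotient.mk _ (X 2)) = v at *
      generalize o q⁻¹ = w at *
      generalize o q = s at *
      have h6 : y ^ 6 = s ^ 2 := by rw [← hy]; ring
      have e1 : 1 + (u * y ^ 2 * w) ^ 3 + (v * y ^ 2 * w) ^ 3
        = 1 + (u ^ 3 + v ^ 3) * y ^ 6 * w ^ 3 := by ring
      have e2 : u ^ 3 + v ^ 3 = - s := by linear_combination hrel
      rw [e1, e2, h6]
      have e3 : (s * w) ^ 3 = 1 := by rw [hqi, one_pow]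
      linear_combination -e3)
  have hcomp : h.comp (psi a b c) = o.comp iB := by
    apply Ideal.Quotient.algHom_ext
    apply MvPolynomial.algHom_ext
    intro i
    change h (psi a b c (Ideal.Quotient.mk _ (X i))) = (o.comp iB) (Ideal.Quotient.mk _ (X i))
    have hk : ∀ s : T, s * y ^ 2 * o q⁻¹ * y = s := fun s => by
      linear_combination s * o q⁻¹ * hy + s * hqi
    rw [psi, liftB_mk, aeval_X]
    fin_cases i
    · change h (Ideal.Quotient.mk _ (X 0)) = _
      simp only [h, liftA_mk, aeval_X]
      rfl
    · change h (Ideal.Quotient.mk _ (X 2 * X 1)) = _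
      simp only [h, liftA_mk, aeval_X, map_mul]
      exact hk _
    · change h (Ideal.Quotient.mk _ (X 3 * X 1)) = _
      simp only [h, liftA_mk, aeval_X, map_mul]
      exact hk _
  have : Function.Injective (h.comp (psi a b c)) := by
    rw [hcomp]
    exact ho.comp hiB
  exact Function.Injective.of_comp (f := h) this

/-- Elements of `C × F₀` scaled by cube roots of unity. -/
theorem exists_scaleA (a b c : ℂ) [IsDomain (HSurf2 (pC a b c) pF₀4)] (u v : ℂ)
    (hu : u ^ 3 = 1) (hv : v ^ 3 = 1) :
    ∃ (f : HSurf2 (pC a b c) pF₀4 →ₐ[ℂ] HSurf2 (pC a b c) pF₀4)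
      (σ : FractionRing (HSurf2 (pC a b c) pF₀4) ≃ₐ[ℂ] FractionRing (HSurf2 (pC a b c) pF₀4)),
      (∀ i, σ (cls2 (pC a b c) pF₀4 (X i)) = (![1, u, v, v] i) • cls2 (pC a b c) pF₀4 (X i)) ∧
      (∀ k, σ (σ (σ k)) = k) ∧ ∀ t, σ (algebraMap _ _ t) = algebraMap _ _ (f t) := by
  obtain ⟨h1, h2⟩ := relA' a b c (AlgHom.id ℂ _)
  rw [q4_map a b c (AlgHom.id ℂ _) _ rfl] at h1
  simp only [AlgHom.id_apply] at h1 h2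
  let f : HSurf2 (pC a b c) pF₀4 →ₐ[ℂ] HSurf2 (pC a b c) pF₀4 := liftA a b c
    (Ideal.Quotient.mk _ (X 0)) (u • Ideal.Quotient.mk _ (X 1)) (v • Ideal.Quotient.mk _ (X 2))
    (v • Ideal.Quotient.mk _ (X 3)) (by rw [smul_pow, hu, one_smul]; exact h1)
    (by rw [smul_pow, smul_pow, hv, one_smul, one_smul]; exact h2)
  refine ⟨f, exists_scale _ ![1, u, v, v] ?_ f ?_⟩
  · intro i; fin_cases i <;> simp [hu, hv]
  · intro i
    simp only [f, liftA_mk, aeval_X]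
    fin_cases i
    · exact (one_smul ℂ _).symm
    · rfl
    · rfl
    · rfl

theorem exists_scaleB (a b c : ℂ) [IsDomain (HSurf (pW₀ a b c))] (u : ℂ) (hu : u ^ 3 = 1) :
    ∃ (σ : FractionRing (HSurf (pW₀ a b c)) ≃ₐ[ℂ] FractionRing (HSurf (pW₀ a b c))),
      (∀ i, σ (cls (pW₀ a b c) (X i)) = (![1, u, u] i) • cls (pW₀ a b c) (X i)) ∧
      (∀ k, σ (σ (σ k)) = k) := by
  have h1 := relB' a b c (AlgHom.id ℂ _)
  rw [q3_map a b c (AlgHom.id ℂ _) _ rfl] at h1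
  simp only [AlgHom.id_apply] at h1
  let f : HSurf (pW₀ a b c) →ₐ[ℂ] HSurf (pW₀ a b c) := liftB a b c
    (Ideal.Quotient.mk _ (X 0)) (u • Ideal.Quotient.mk _ (X 1)) (u • Ideal.Quotient.mk _ (X 2))
    (by rw [smul_pow, smul_pow, hu, one_smul, one_smul]; exact h1)
  obtain ⟨σ, h1, h2, -⟩ := exists_scale _ ![1, u, u] (by intro i; fin_cases i <;> simp [hu]) f (by
    intro i
    simp only [f, liftB_mk, aeval_X]
    fin_cases i
    · exact (one_smul ℂ _).symm
    · rfl
    · rfl)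
  exact ⟨σ, h1, h2⟩

/-- Every regular function on `C × F₀` is `α + β y + γ y²` with `α, β, γ` in the function
field of `W₀`. -/
theorem span_y (a b c : ℂ) [IsDomain (HSurf (pW₀ a b c))] {K : Type} [Field K] [Algebra ℂ K]
    (i : HSurf2 (pC a b c) pF₀4 →ₐ[ℂ] K) (hy : i (Ideal.Quotient.mk _ (X 1)) ≠ 0)
    (φ : FractionRing (HSurf (pW₀ a b c)) →ₐ[ℂ] K)
    (hφ : ∀ t, φ (algebraMap _ _ t) = i (psi a b c t)) (p : MvPolynomial (Fin 4) ℂ) :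
    ∃ α β γ : FractionRing (HSurf (pW₀ a b c)), i (Ideal.Quotient.mk _ p) =
      φ α + φ β * i (Ideal.Quotient.mk _ (X 1)) + φ γ * i (Ideal.Quotient.mk _ (X 1)) ^ 2 := by
  obtain ⟨h1, -⟩ := relA' a b c i
  rw [q4_map a b c i _ rfl] at h1
  have hx : φ (cls (pW₀ a b c) (X 0)) = i (Ideal.Quotient.mk _ (X 0)) := by
    refine (hφ _).trans ?_
    simp only [psi, liftB_mk, aeval_X]; rfl
  have hz1 : φ (cls (pW₀ a b c) (X 1)) =
      i (Ideal.Quotient.mk _ (X 2)) * i (Ideal.Quotient.mk _ (X 1)) := by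
    refine (hφ _).trans ?_
    rw [← map_mul, ← map_mul]; simp only [psi, liftB_mk, aeval_X]; rfl
  have hz2 : φ (cls (pW₀ a b c) (X 2)) =
      i (Ideal.Quotient.mk _ (X 3)) * i (Ideal.Quotient.mk _ (X 1)) := by
    refine (hφ _).trans ?_
    rw [← map_mul, ← map_mul]; simp only [psi, liftB_mk, aeval_X]; rfl
  have hq := q3_map a b c (φ.comp (IsScalarTower.toAlgHom ℂ (HSurf (pW₀ a b c))
    (FractionRing (HSurf (pW₀ a b c))))) _ hx
  rw [← h1] at hq
  change φ (cls (pW₀ a b c) (q3 a b c)) = _ at hq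
  generalize cls (pW₀ a b c) (q3 a b c) = Q at *
  generalize cls (pW₀ a b c) (X 0) = ξ at *
  generalize cls (pW₀ a b c) (X 1) = η₁ at *
  generalize cls (pW₀ a b c) (X 2) = η₂ at *
  have hQ : φ Q ≠ 0 := by rw [hq]; exact pow_ne_zero 3 hy
  clear h1
  induction p using MvPolynomial.induction_on with
  | C t =>
    refine ⟨algebraMap ℂ _ t, 0, 0, ?_⟩
    rw [φ.commutes, map_zero]
    have : i (Ideal.Quotient.mk _ (C t)) = algebraMap ℂ K t := i.commutes t
    rw [this]; ring
  | add p q hp hq =>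
    obtain ⟨α, β, γ, h⟩ := hp
    obtain ⟨α', β', γ', h'⟩ := hq
    refine ⟨α + α', β + β', γ + γ', ?_⟩
    simp only [map_add, h, h']; ring
  | mul_X p j hp =>
    obtain ⟨α, β, γ, h⟩ := hp
    rw [map_mul, map_mul, h]
    have key : ∀ (η : FractionRing (HSurf (pW₀ a b c))) (z : K),
        φ η = z * i (Ideal.Quotient.mk _ (X 1)) →
        (φ α + φ β * i (Ideal.Quotient.mk _ (X 1)) +
          φ γ * i (Ideal.Quotient.mk _ (X 1)) ^ 2) * z =
        φ (β * η) + φ (γ * η) * i (Ideal.Quotient.mk _ (X 1)) +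
          φ (α * η / Q) * i (Ideal.Quotient.mk _ (X 1)) ^ 2 := by
      intro η z hz
      rw [map_div₀, map_mul, map_mul, map_mul, hz, hq]
      field_simp
      ring
    fin_cases j
    · refine ⟨α * ξ, β * ξ, γ * ξ, ?_⟩
      simp only [map_mul, hx]
      change _ * i (Ideal.Quotient.mk _ (X 0)) = _
      ring
    · refine ⟨γ * Q, α, β, ?_⟩
      simp only [map_mul, hq]
      change _ * i (Ideal.Quotient.mk _ (X 1)) = _
      ring
    · exact ⟨_, _, _, key η₁ _ hz1⟩
    · exact ⟨_, _, _, key η₂ _ hz2⟩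

set_option maxHeartbeats 2000000 in
/-- Let `a, b, c ∈ ℂ ∖ {0,1}` be pairwise distinct and let
`K = Frac(ℂ[x,y,z₁,z₂]/(y³ − x(x−1)(x−a)(x−b)(x−c), 1 + z₁³ + z₂³))` be the function
field of `C × F₀`.  Let `σ` be the order-3 automorphism of `K` with `σ(y) = ω·y`,
`σ(z₁) = ω²·z₁`, `σ(z₂) = ω²·z₂` (fixing `x`) — the diagonal `G = ℤ/3ℤ` action — and
let `ρ` be the order-3 automorphism of `K` with `ρ(y) = ω·y` (fixing `x, z₁, z₂`);
`ρ` preserves the fixed field `L = K^σ`.  Then there is a `ℂ`-algebra isomorphism `φ`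
from the function field of `W₀` onto `L` intertwining the order-3 automorphism
`(y₁, y₂) ↦ (ω·y₁, ω·y₂)` of `Frac(W₀)` with the restriction of `ρ` to `L`; an
isomorphism is induced by `y₁ ↦ z₁·y`, `y₂ ↦ z₂·y`, with `x` unchanged.  In other
words, `W` is `G`-birationally equivalent to the quotient `(C × F)/G`. -/
theorem stmt8 (a b c : ℂ) (ha0 : a ≠ 0) (ha1 : a ≠ 1) (hb0 : b ≠ 0) (hb1 : b ≠ 1)
    (hc0 : c ≠ 0) (hc1 : c ≠ 1) (hab : a ≠ b) (hac : a ≠ c) (hbc : b ≠ c) :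
    ∃ (σ ρ : FractionRing (HSurf2 (pC a b c) pF₀4) ≃ₐ[ℂ] FractionRing (HSurf2 (pC a b c) pF₀4)),
      orderOf σ = 3 ∧
      σ (cls2 (pC a b c) pF₀4 (X 1)) = (ω : ℂ) • cls2 (pC a b c) pF₀4 (X 1) ∧
      σ (cls2 (pC a b c) pF₀4 (X 2)) = (ω ^ 2 : ℂ) • cls2 (pC a b c) pF₀4 (X 2) ∧
      σ (cls2 (pC a b c) pF₀4 (X 3)) = (ω ^ 2 : ℂ) • cls2 (pC a b c) pF₀4 (X 3) ∧
      σ (cls2 (pC a b c) pF₀4 (X 0)) = cls2 (pC a b c) pF₀4 (X 0) ∧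
      orderOf ρ = 3 ∧
      ρ (cls2 (pC a b c) pF₀4 (X 1)) = (ω : ℂ) • cls2 (pC a b c) pF₀4 (X 1) ∧
      ρ (cls2 (pC a b c) pF₀4 (X 0)) = cls2 (pC a b c) pF₀4 (X 0) ∧
      ρ (cls2 (pC a b c) pF₀4 (X 2)) = cls2 (pC a b c) pF₀4 (X 2) ∧
      ρ (cls2 (pC a b c) pF₀4 (X 3)) = cls2 (pC a b c) pF₀4 (X 3) ∧
      (∀ k, σ k = k → σ (ρ k) = ρ k) ∧
      ∃ (σW : FractionRing (HSurf (pW₀ a b c)) ≃ₐ[ℂ] FractionRing (HSurf (pW₀ a b c)))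
        (φ : FractionRing (HSurf (pW₀ a b c)) ≃ₐ[ℂ]
          (AlgHom.equalizer σ.toAlgHom (AlgHom.id ℂ (FractionRing (HSurf2 (pC a b c) pF₀4))))),
        orderOf σW = 3 ∧
        σW (cls (pW₀ a b c) (X 1)) = (ω : ℂ) • cls (pW₀ a b c) (X 1) ∧
        σW (cls (pW₀ a b c) (X 2)) = (ω : ℂ) • cls (pW₀ a b c) (X 2) ∧
        σW (cls (pW₀ a b c) (X 0)) = cls (pW₀ a b c) (X 0) ∧
        (↑(φ (cls (pW₀ a b c) (X 1))) : FractionRing (HSurf2 (pC a b c) pF₀4))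
          = cls2 (pC a b c) pF₀4 (X 2 * X 1) ∧
        (↑(φ (cls (pW₀ a b c) (X 2))) : FractionRing (HSurf2 (pC a b c) pF₀4))
          = cls2 (pC a b c) pF₀4 (X 3 * X 1) ∧
        (↑(φ (cls (pW₀ a b c) (X 0))) : FractionRing (HSurf2 (pC a b c) pF₀4))
          = cls2 (pC a b c) pF₀4 (X 0) ∧
        ∀ s, (↑(φ (σW s)) : FractionRing (HSurf2 (pC a b c) pF₀4)) = ρ ↑(φ s) := by
  have hA := A_domain a b c ha0 hb0 hc0
  have hB := B_domain a b c ha0 hb0 hc0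
  obtain ⟨f, σ, hσ, hσ3, hσf⟩ := exists_scaleA a b c ω (ω ^ 2) omega_cube
    (by rw [← pow_mul, mul_comm, pow_mul, omega_cube, one_pow])
  obtain ⟨f', ρ, hρ, hρ3, -⟩ := exists_scaleA a b c ω 1 omega_cube (by norm_num)
  obtain ⟨σW, hW, hW3⟩ := exists_scaleB a b c ω omega_cube
  have hinjA : Function.Injective (algebraMap (HSurf2 (pC a b c) pF₀4)
    (FractionRing (HSurf2 (pC a b c) pF₀4))) := IsFractionRing.injective _ _
  have hinjB : Function.Injective (algebraMap (HSurf (pW₀ a b c))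
    (FractionRing (HSurf (pW₀ a b c)))) := IsFractionRing.injective _ _
  have hy0 : cls2 (pC a b c) pF₀4 (X 1) ≠ 0 :=
    (map_ne_zero_iff _ hinjA).mpr (y_ne_zero a b c)
  have hy1 : cls (pW₀ a b c) (X 1) ≠ 0 :=
    (map_ne_zero_iff _ hinjB).mpr (y1_ne_zero a b c)
  let iA : HSurf2 (pC a b c) pF₀4 →ₐ[ℂ] FractionRing (HSurf2 (pC a b c) pF₀4) :=
    IsScalarTower.toAlgHom ℂ _ _
  have hinj : Function.Injective (iA.comp (psi a b c)) := hinjA.comp (psi_injective a b c)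
  let φ₀ : FractionRing (HSurf (pW₀ a b c)) →ₐ[ℂ] FractionRing (HSurf2 (pC a b c) pF₀4) :=
    IsFractionRing.liftAlgHom (K := FractionRing (HSurf (pW₀ a b c))) hinj
  have hφ : ∀ t, φ₀ (algebraMap _ _ t) = iA (psi a b c t) := fun t =>
    IsFractionRing.lift_algebraMap hinj t
  have hφ0 : φ₀ (cls (pW₀ a b c) (X 0)) = cls2 (pC a b c) pF₀4 (X 0) := by
    refine (hφ _).trans ?_
    simp only [psi, liftB_mk, aeval_X]; rfl
  have hφ1 : φ₀ (cls (pW₀ a b c) (X 1)) = cls2 (pC a b c) pF₀4 (X 2 * X 1) := by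
    refine (hφ _).trans ?_
    simp only [psi, liftB_mk, aeval_X]; rfl
  have hφ2 : φ₀ (cls (pW₀ a b c) (X 2)) = cls2 (pC a b c) pF₀4 (X 3 * X 1) := by
    refine (hφ _).trans ?_
    simp only [psi, liftB_mk, aeval_X]; rfl
  have clsmul : ∀ p q, cls2 (pC a b c) pF₀4 (p * q) =
      cls2 (pC a b c) pF₀4 p * cls2 (pC a b c) pF₀4 q := by
    intro p q; simp only [cls2, map_mul]
  have s0 : σ (cls2 (pC a b c) pF₀4 (X 0)) = cls2 (pC a b c) pF₀4 (X 0) :=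
    (hσ 0).trans (one_smul ℂ _)
  have s1 : σ (cls2 (pC a b c) pF₀4 (X 1)) = ω • cls2 (pC a b c) pF₀4 (X 1) := hσ 1
  have s2 : σ (cls2 (pC a b c) pF₀4 (X 2)) = ω ^ 2 • cls2 (pC a b c) pF₀4 (X 2) := hσ 2
  have s3 : σ (cls2 (pC a b c) pF₀4 (X 3)) = ω ^ 2 • cls2 (pC a b c) pF₀4 (X 3) := hσ 3
  have r0 : ρ (cls2 (pC a b c) pF₀4 (X 0)) = cls2 (pC a b c) pF₀4 (X 0) :=
    (hρ 0).trans (one_smul ℂ _)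
  have r1 : ρ (cls2 (pC a b c) pF₀4 (X 1)) = ω • cls2 (pC a b c) pF₀4 (X 1) := hρ 1
  have r2 : ρ (cls2 (pC a b c) pF₀4 (X 2)) = cls2 (pC a b c) pF₀4 (X 2) :=
    (hρ 2).trans (one_smul ℂ _)
  have r3 : ρ (cls2 (pC a b c) pF₀4 (X 3)) = cls2 (pC a b c) pF₀4 (X 3) :=
    (hρ 3).trans (one_smul ℂ _)
  have w0 : σW (cls (pW₀ a b c) (X 0)) = cls (pW₀ a b c) (X 0) :=
    (hW 0).trans (one_smul ℂ _)
  have w1 : σW (cls (pW₀ a b c) (X 1)) = ω • cls (pW₀ a b c) (X 1) := hW 1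
  have w2 : σW (cls (pW₀ a b c) (X 2)) = ω • cls (pW₀ a b c) (X 2) := hW 2
  have hcomm : σ.toAlgHom.comp ρ.toAlgHom = ρ.toAlgHom.comp σ.toAlgHom := by
    apply frac_hom_ext
    intro i
    change σ (ρ (cls2 (pC a b c) pF₀4 (X i))) = ρ (σ (cls2 (pC a b c) pF₀4 (X i)))
    rw [hσ, hρ, map_smul, map_smul, hσ, hρ, smul_comm]
  have hω3 : ω ^ 2 * ω = 1 := by rw [← pow_succ]; exact omega_cube
  have hfix : σ.toAlgHom.comp φ₀ = φ₀ := by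
    apply frac_hom_ext
    intro i
    change σ (φ₀ (cls (pW₀ a b c) (X i))) = φ₀ (cls (pW₀ a b c) (X i))
    fin_cases i
    · change σ (φ₀ (cls (pW₀ a b c) (X 0))) = φ₀ (cls (pW₀ a b c) (X 0))
      rw [hφ0, s0]
    · change σ (φ₀ (cls (pW₀ a b c) (X 1))) = φ₀ (cls (pW₀ a b c) (X 1))
      rw [hφ1, clsmul, map_mul, s1, s2, smul_mul_smul_comm, hω3, one_smul]
    · change σ (φ₀ (cls (pW₀ a b c) (X 2))) = φ₀ (cls (pW₀ a b c) (X 2))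
      rw [hφ2, clsmul, map_mul, s1, s3, smul_mul_smul_comm, hω3, one_smul]
  have hfix' : ∀ s, σ (φ₀ s) = φ₀ s := fun s => DFunLike.congr_fun hfix s
  have hinter : φ₀.comp σW.toAlgHom = ρ.toAlgHom.comp φ₀ := by
    apply frac_hom_ext
    intro i
    change φ₀ (σW (cls (pW₀ a b c) (X i))) = ρ (φ₀ (cls (pW₀ a b c) (X i)))
    fin_cases i
    · change φ₀ (σW (cls (pW₀ a b c) (X 0))) = ρ (φ₀ (cls (pW₀ a b c) (X 0)))
      rw [w0, hφ0, r0]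
    · change φ₀ (σW (cls (pW₀ a b c) (X 1))) = ρ (φ₀ (cls (pW₀ a b c) (X 1)))
      rw [w1, map_smul, hφ1, clsmul, map_mul, r1, r2, mul_smul_comm]
    · change φ₀ (σW (cls (pW₀ a b c) (X 2))) = ρ (φ₀ (cls (pW₀ a b c) (X 2)))
      rw [w2, map_smul, hφ2, clsmul, map_mul, r1, r3, mul_smul_comm]
  have hφinj : Function.Injective φ₀ := φ₀.toRingHom.injective
  -- fixed regular functions lie in the image
  have hregular : ∀ t, σ (iA t) = iA t → ∃ s, φ₀ s = iA t := by
    intro t ht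
    obtain ⟨p, rfl⟩ := Ideal.Quotient.mk_surjective t
    obtain ⟨α, β, γ, h⟩ := span_y a b c iA hy0 φ₀ hφ p
    refine ⟨α, ?_⟩
    have e1 : σ (iA (Ideal.Quotient.mk _ (X 1))) =
        algebraMap ℂ _ ω * iA (Ideal.Quotient.mk _ (X 1)) := by
      rw [← Algebra.smul_def]; exact s1
    have h1 := congrArg σ h
    have h2 := congrArg σ h1
    have hσω : σ (algebraMap ℂ _ ω) = algebraMap ℂ _ ω := σ.commutes ω
    simp only [map_add, map_mul, map_pow, hfix', e1, ht, hσω] at h1 h2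
    have hs := congrArg (algebraMap ℂ (FractionRing (HSurf2 (pC a b c) pF₀4))) omega_sum
    have hc := congrArg (algebraMap ℂ (FractionRing (HSurf2 (pC a b c) pF₀4))) omega_cube
    simp only [map_add, map_pow, map_one, map_zero] at hs hc
    have h3 : (3 : FractionRing (HSurf2 (pC a b c) pF₀4)) ≠ 0 := by
      have := (map_ne_zero (algebraMap ℂ (FractionRing (HSurf2 (pC a b c) pF₀4)))).mpr
        (three_ne_zero (α := ℂ))
      rwa [map_ofNat] at this
    apply mul_left_cancel₀ h3
    generalize iA (Ideal.Quotient.mk _ (X 1)) = y at *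
    generalize algebraMap ℂ (FractionRing (HSurf2 (pC a b c) pF₀4)) ω = w at *
    generalize iA (Ideal.Quotient.mk _ p) = P at *
    linear_combination -(h + h1 + h2) - φ₀ β * y * hs - φ₀ γ * y ^ 2 * (hs + w * hc)
  have hsurj : ∀ k, σ k = k → ∃ s, φ₀ s = k := by
    intro k hk
    obtain ⟨p, q, hq, rfl⟩ := IsFractionRing.div_surjective (HSurf2 (pC a b c) pF₀4) k
    have hq0 : q ≠ 0 := nonZeroDivisors.ne_zero hq
    have hi : ∀ t, σ (iA t) = iA (f t) := hσf
    have hiA : Function.Injective iA := hinjA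
    change σ (iA p / iA q) = iA p / iA q at hk
    change ∃ s, φ₀ s = iA p / iA q
    have hQ0 : iA q ≠ 0 := (map_ne_zero_iff iA hiA).mpr hq0
    have hQ1 : iA (f q) ≠ 0 := by rw [← hi]; exact (map_ne_zero_iff σ σ.injective).mpr hQ0
    have hQ2 : iA (f (f q)) ≠ 0 := by rw [← hi]; exact (map_ne_zero_iff σ σ.injective).mpr hQ1
    have h3 : iA (f (f (f q))) = iA q := by rw [← hi, ← hi, ← hi, hσ3]
    have hN : σ (iA (q * f q * f (f q))) = iA (q * f q * f (f q)) := by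
      simp only [map_mul, hi, h3]; ring
    have hPeq : iA (p * f q * f (f q)) = iA p / iA q * iA (q * f q * f (f q)) := by
      simp only [map_mul]; field_simp
    have hP : σ (iA (p * f q * f (f q))) = iA (p * f q * f (f q)) := by
      rw [hPeq, map_mul, hk, hN]
    obtain ⟨s, hs⟩ := hregular _ hP
    obtain ⟨t, ht⟩ := hregular _ hN
    refine ⟨s / t, ?_⟩
    rw [map_div₀, hs, ht]
    simp only [map_mul]
    field_simp
  let φ₁ : FractionRing (HSurf (pW₀ a b c)) →ₐ[ℂ]
      (AlgHom.equalizer σ.toAlgHom (AlgHom.id ℂ (FractionRing (HSurf2 (pC a b c) pF₀4)))) :=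
    φ₀.codRestrict _ (fun s => hfix' s)
  have hbij : Function.Bijective φ₁ := by
    constructor
    · intro s t h
      exact hφinj (congrArg Subtype.val h)
    · rintro ⟨k, hk⟩
      obtain ⟨s, hs⟩ := hsurj k hk
      exact ⟨s, Subtype.ext hs⟩
  refine ⟨σ, ρ, order_three σ _ hy0 s1 hσ3, s1, s2, s3, s0, order_three ρ _ hy0 r1 hρ3, r1, r0,
    r2, r3, ?_, σW, AlgEquiv.ofBijective φ₁ hbij, order_three σW _ hy1 w1 hW3, w1, w2, w0,
    hφ1, hφ2, hφ0, ?_⟩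
  · intro k hk
    have : σ (ρ k) = ρ (σ k) := DFunLike.congr_fun hcomm k
    rw [this, hk]
  · intro s
    exact DFunLike.congr_fun hinter s
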